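/- Let k ≥ 1 and let (K, X_0) be the graphical conjunctive query in which K is the complete graph on 2k vertices and X_0 is a set of exactly k of its vertices. Then every graphical conjunctive query (H,X) with |X| ≤ k and |V(H) ∖ X| ≤ k is a query minor of (K, X_0). -/

import Mathlib

/-!
Contractions are not needed. Since `|X| ≤ k = |X₀|` and `|V(H) ∖ X| ≤ k = |X₀ᶜ|`, there is an
injection `f` from `V(H)` to the vertices of the complete graph that sends free variables to free
variables and quantified variables to quantified variables. Deleting all edges of the complete
graph outside the image of `H` (`reflTransGen_of_le`) leaves a copy of `H` together with isolated
vertices; deleting those one by one (`reflTransGen_of_embedding`) leaves a query isomorphic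
to `(H, X)`.
-/

/-- A graphical conjunctive query: a finite simple graph together with a set of
free variables. -/
structure Query where
  V : Type
  fin : Fintype V
  graph : SimpleGraph V
  free : Set V

attribute [instance] Query.fin

/-- Edge deletion: delete the edge `{u, v}`, keeping the free variables. -/
def Query.deleteEdge (Q : Query) (u v : Q.V) : Query :=
  ⟨Q.V, Q.fin, Q.graph.deleteEdges {s(u, v)}, Q.free⟩

/-- Vertex deletion: delete the (isolated) vertex `v`, removing it from the free
variables if present. -/
noncomputable def Query.deleteVertex (Q : Query) (v : Q.V) : Query :=
  ⟨↥({u : Q.V | u ≠ v}), Fintype.ofFinite _, Q.graph.induce {u : Q.V | u ≠ v},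
    {u : ↥({u : Q.V | u ≠ v}) | (u : Q.V) ∈ Q.free}⟩

/-- Edge contraction: contract the edge `{u, v}` to the vertex `u` (which represents
the merged vertex `w`); `w` is free iff `u` or `v` was free. -/
noncomputable def Query.contract (Q : Query) (u v : Q.V) : Query :=
  ⟨↥({x : Q.V | x ≠ v}), Fintype.ofFinite _,
    SimpleGraph.fromRel (fun a b => Q.graph.Adj a.val b.val ∨ (a.val = u ∧ Q.graph.Adj v b.val)),
    {x : ↥({x : Q.V | x ≠ v}) | (x : Q.V) ∈ Q.free ∨ ((x : Q.V) = u ∧ v ∈ Q.free)}⟩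

/-- Two queries are isomorphic if there is a graph isomorphism mapping the free
variables of one onto those of the other. -/
def Query.IsoTo (Q Q' : Query) : Prop :=
  ∃ e : Q.graph ≃g Q'.graph, ⇑e '' Q.free = Q'.free

/-- One-step minor operations on queries (up to isomorphism / renaming). -/
inductive QueryStep : Query → Query → Prop
  | edgeDel (Q : Query) (u v : Q.V) (h : Q.graph.Adj u v) : QueryStep Q (Q.deleteEdge u v)
  | vertexDel (Q : Query) (v : Q.V) (h : ∀ w, ¬ Q.graph.Adj v w) : QueryStep Q (Q.deleteVertex v)
  | contract (Q : Query) (u v : Q.V) (h : Q.graph.Adj u v) : QueryStep Q (Q.contract u v)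
  | iso (Q Q' : Query) (h : Q.IsoTo Q') : QueryStep Q Q'

/-- `Q'` is a query minor of `Q` if it arises from `Q` by a finite sequence of
one-step minor operations. -/
def Query.IsMinorOf (Q' Q : Query) : Prop := Relation.ReflTransGen QueryStep Q Q'

/-- Passing to a spanning subgraph is a sequence of edge deletions. -/
theorem reflTransGen_of_le {V : Type} (fin : Fintype V) (X : Set V) (G' : SimpleGraph V) :
    ∀ G : SimpleGraph V, G' ≤ G →
      Relation.ReflTransGen QueryStep ⟨V, fin, G, X⟩ ⟨V, fin, G', X⟩ := by
  intro G
  induction G using WellFoundedLT.induction with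
  | ind G ih =>
    intro hle
    by_cases hge : G ≤ G'
    · rw [le_antisymm hge hle]
    · obtain ⟨u, v, huv, huv'⟩ : ∃ u v, G.Adj u v ∧ ¬ G'.Adj u v := by
        by_contra! hcon
        exact hge fun u v => hcon u v
      have hlt : G.deleteEdges {s(u, v)} < G := by
        refine lt_of_le_of_ne (SimpleGraph.deleteEdges_le _) fun heq => ?_
        rw [← heq, SimpleGraph.deleteEdges_adj] at huv
        exact huv.2 rfl
      have hle' : G' ≤ G.deleteEdges {s(u, v)} := by
        intro a b hab
        rw [SimpleGraph.deleteEdges_adj]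
        refine ⟨hle hab, fun hmem => huv' ?_⟩
        rw [Set.mem_singleton_iff] at hmem
        rwa [← SimpleGraph.mem_edgeSet, ← hmem]
      exact Relation.ReflTransGen.head (QueryStep.edgeDel ⟨V, fin, G, X⟩ u v huv) (ih _ hlt hle')

/-- If `Q` embeds into `P` compatibly with the free variables and every vertex of `P` outside the
image is isolated, then `Q` arises from `P` by deleting these vertices. -/
theorem reflTransGen_of_embedding (Q : Query) (n : ℕ) :
    ∀ (P : Query) (f : Q.graph ↪g P.graph), Nat.card P.V = n →
      (∀ x, f x ∈ P.free ↔ x ∈ Q.free) → (∀ a b, P.graph.Adj a b → a ∈ Set.range f) →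
      Relation.ReflTransGen QueryStep P Q := by
  induction n with
  | zero =>
    intro P f hn hfree hadj
    have hP : IsEmpty P.V := Finite.card_eq_zero_iff.mp hn
    have hsurj : Function.Surjective f := fun y => hP.elim y
    refine Relation.ReflTransGen.single (QueryStep.iso P Q ⟨(RelIso.ofSurjective f hsurj).symm, ?_⟩)
    ext x
    exact (hP.elim (f x))
  | succ n ih =>
    intro P f hn hfree hadj
    by_cases hsurj : Function.Surjective f
    · refine Relation.ReflTransGen.single
        (QueryStep.iso P Q ⟨(RelIso.ofSurjective f hsurj).symm, ?_⟩)
      ext x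
      constructor
      · rintro ⟨y, hy, rfl⟩
        obtain ⟨z, rfl⟩ := hsurj y
        have : (RelIso.ofSurjective f hsurj).symm (f z) = z :=
          (RelIso.ofSurjective f hsurj).symm_apply_apply z
        rw [this]
        exact (hfree z).1 hy
      · intro hx
        exact ⟨f x, (hfree x).2 hx, (RelIso.ofSurjective f hsurj).symm_apply_apply x⟩
    · obtain ⟨v, hv⟩ : ∃ v, v ∉ Set.range f := by
        by_contra! hcon
        exact hsurj hcon
      refine Relation.ReflTransGen.head
        (QueryStep.vertexDel P v fun w hw => hv (hadj v w hw)) ?_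
      have hne : ∀ x, f x ≠ v := fun x hx => hv ⟨x, hx⟩
      let g : Q.graph ↪g (P.deleteVertex v).graph :=
        { toFun := fun x => ⟨f x, hne x⟩
          inj' := fun x y hxy => f.injective (congrArg Subtype.val hxy)
          map_rel_iff' := f.map_rel_iff }
      refine ih (P.deleteVertex v) g ?_ hfree ?_
      · have hcard : Nat.card {u : P.V | u ≠ v} = n := by
          have h1 := Set.ncard_add_ncard_compl ({v} : Set P.V)
          rw [Set.ncard_singleton, hn] at h1
          have h2 : Nat.card {u : P.V | u ≠ v} = ({v}ᶜ : Set P.V).ncard := rfl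
          omega
        exact hcard
      · intro a b hab
        obtain ⟨x, hx⟩ := hadj a.1 b.1 hab
        exact ⟨x, Subtype.ext hx⟩

theorem nonempty_embedding_of_card_le {α β : Type} [Finite α] [Finite β]
    (h : Nat.card α ≤ Nat.card β) : Nonempty (α ↪ β) := by
  have := Fintype.ofFinite α
  have := Fintype.ofFinite β
  rw [Nat.card_eq_fintype_card, Nat.card_eq_fintype_card] at h
  exact Function.Embedding.nonempty_of_card_le h

/-- An injection `V → W` mapping `X` into `Y` and the complement of `X` into that of `Y`. -/
theorem exists_injective_mem_iff {V W : Type} [Finite V] [Finite W] (X : Set V) (Y : Set W)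
    (h : X.ncard ≤ Y.ncard) (hc : Xᶜ.ncard ≤ Yᶜ.ncard) :
    ∃ f : V ↪ W, ∀ x, f x ∈ Y ↔ x ∈ X := by
  classical
  obtain ⟨e₁⟩ : Nonempty (X ↪ Y) := nonempty_embedding_of_card_le h
  obtain ⟨e₂⟩ : Nonempty (↥Xᶜ ↪ ↥Yᶜ) := nonempty_embedding_of_card_le hc
  let f : V ↪ W := (Equiv.Set.sumCompl X).symm.toEmbedding.trans
    ((e₁.sumMap e₂).trans (Equiv.Set.sumCompl Y).toEmbedding)
  refine ⟨f, fun x => ?_⟩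
  by_cases hx : x ∈ X
  · have : f x = e₁ ⟨x, hx⟩ := by
      simp [f, Equiv.Set.sumCompl_symm_apply_of_mem hx]
    simp [this, hx]
  · have : f x = e₂ ⟨x, hx⟩ := by
      simp [f, Equiv.Set.sumCompl_symm_apply_of_notMem hx]
    rw [this]
    exact iff_of_false (e₂ ⟨x, hx⟩).2 hx

/-- Every graphical conjunctive query with at most `k` free variables and at most
`k` quantified variables is a query minor of the complete graph on `2k` vertices
with `k` of its vertices free. -/
theorem stmt_19 (k : ℕ) (hk : 1 ≤ k) (X0 : Set (Fin (2 * k))) (hX0 : X0.ncard = k)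
    (Q : Query) (hfree : Q.free.ncard ≤ k) (hquant : (Q.freeᶜ).ncard ≤ k) :
    Q.IsMinorOf ⟨Fin (2 * k), inferInstance, (⊤ : SimpleGraph (Fin (2 * k))), X0⟩ := by
  have hcompl : X0ᶜ.ncard = k := by
    have h1 := Set.ncard_add_ncard_compl X0
    rw [Nat.card_fin] at h1
    omega
  obtain ⟨f, hf⟩ := exists_injective_mem_iff Q.free X0 (hfree.trans_eq hX0.symm)
    (hquant.trans_eq hcompl.symm)
  refine (reflTransGen_of_le inferInstance X0 (Q.graph.map f) ⊤ le_top).trans ?_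
  refine reflTransGen_of_embedding Q _ ⟨Fin (2 * k), inferInstance, Q.graph.map f, X0⟩
    (SimpleGraph.Embedding.map f Q.graph) rfl hf ?_
  intro a b hab
  obtain ⟨x, y, -, hx, -⟩ := (SimpleGraph.map_adj f Q.graph a b).1 hab
  exact ⟨x, hx⟩
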